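/- Let M be the category of finitely presented left P_k(Ē)-modules M with L_k(E) ⊗_{P_k(Ē)} M = 0. Then every object of M is finite-dimensional over k, and M is a Serre subcategory of the category fpl(P_k(Ē)) of finitely presented left P_k(Ē)-modules of finite length. Moreover, the induced homomorphism K_0(M) → K_0(fpl(P_k(Ē))) is injective and its image is the subgroup generated by the classes of the simple modules belonging to M. -/

import Mathlib

namespace LPA

/-- A finite quiver: finite sets of vertices and arrows with source and target maps. -/
structure FinQuiver : Type 1 where
  V : Type
  A : Type
  [fintypeV : Fintype V]
  [decEqV : DecidableEq V]
  [fintypeA : Fintype A]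
  [decEqA : DecidableEq A]
  src : A → V
  tgt : A → V

attribute [instance] FinQuiver.fintypeV FinQuiver.decEqV FinQuiver.fintypeA FinQuiver.decEqA

/-- The inverse quiver: all arrows reversed. -/
def FinQuiver.rev (Q : FinQuiver) : FinQuiver where
  V := Q.V
  A := Q.A
  fintypeV := Q.fintypeV
  decEqV := Q.decEqV
  fintypeA := Q.fintypeA
  decEqA := Q.decEqA
  src := Q.tgt
  tgt := Q.src

/-- Generators of the path algebra: a trivial path `p v` for each vertex and an arrow `e` for
each arrow. -/
inductive PathGen (Q : FinQuiver) : Type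
  | vertex (v : Q.V) : PathGen Q
  | edge (e : Q.A) : PathGen Q

/-- Defining relations of the path algebra: the trivial paths are pairwise orthogonal
idempotents summing to `1`, and `p (src e) * e = e = e * p (tgt e)`. -/
inductive PathRel (k : Type) [CommRing k] (Q : FinQuiver) :
    FreeAlgebra k (PathGen Q) → FreeAlgebra k (PathGen Q) → Prop
  | vertex_mul_self (v : Q.V) :
      PathRel k Q (FreeAlgebra.ι k (PathGen.vertex v) * FreeAlgebra.ι k (PathGen.vertex v))
        (FreeAlgebra.ι k (PathGen.vertex v))
  | vertex_mul_ne (v w : Q.V) (h : v ≠ w) :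
      PathRel k Q (FreeAlgebra.ι k (PathGen.vertex v) * FreeAlgebra.ι k (PathGen.vertex w)) 0
  | sum_vertex :
      PathRel k Q (∑ v : Q.V, FreeAlgebra.ι k (PathGen.vertex v)) 1
  | src_mul (e : Q.A) :
      PathRel k Q
        (FreeAlgebra.ι k (PathGen.vertex (Q.src e)) * FreeAlgebra.ι k (PathGen.edge e))
        (FreeAlgebra.ι k (PathGen.edge e))
  | mul_tgt (e : Q.A) :
      PathRel k Q
        (FreeAlgebra.ι k (PathGen.edge e) * FreeAlgebra.ι k (PathGen.vertex (Q.tgt e)))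
        (FreeAlgebra.ι k (PathGen.edge e))

/-- The path algebra `P_k(Q)` of a finite quiver `Q`, presented by generators and relations. -/
def PathAlg (k : Type) [CommRing k] (Q : FinQuiver) : Type :=
  RingQuot (PathRel k Q)

variable (k : Type) [CommRing k] (Q : FinQuiver)

noncomputable instance : Ring (PathAlg k Q) :=
  inferInstanceAs (Ring (RingQuot (PathRel k Q)))

noncomputable instance : Algebra k (PathAlg k Q) :=
  inferInstanceAs (Algebra k (RingQuot (PathRel k Q)))

/-- The quotient map from the free algebra onto the path algebra. -/
noncomputable def PathAlg.mk : FreeAlgebra k (PathGen Q) →ₐ[k] PathAlg k Q :=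
  RingQuot.mkAlgHom k (PathRel k Q)

/-- The trivial path (vertex idempotent) `p v` in the path algebra. -/
noncomputable def PathAlg.p (v : Q.V) : PathAlg k Q :=
  PathAlg.mk k Q (FreeAlgebra.ι k (PathGen.vertex v))

/-- The arrow `e` in the path algebra. -/
noncomputable def PathAlg.arrow (e : Q.A) : PathAlg k Q :=
  PathAlg.mk k Q (FreeAlgebra.ι k (PathGen.edge e))

theorem PathAlg.mk_rel {x y : FreeAlgebra k (PathGen Q)} (h : PathRel k Q x y) :
    PathAlg.mk k Q x = PathAlg.mk k Q y :=
  RingQuot.mkAlgHom_rel k h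

theorem PathAlg.p_mul_self (v : Q.V) : PathAlg.p k Q v * PathAlg.p k Q v = PathAlg.p k Q v := by
  have h := PathAlg.mk_rel k Q (PathRel.vertex_mul_self v)
  simpa [map_mul, PathAlg.p] using h

theorem PathAlg.p_mul_ne (v w : Q.V) (hvw : v ≠ w) :
    PathAlg.p k Q v * PathAlg.p k Q w = 0 := by
  have h := PathAlg.mk_rel k Q (PathRel.vertex_mul_ne v w hvw)
  simpa [map_mul, PathAlg.p] using h

theorem PathAlg.sum_p : (∑ v : Q.V, PathAlg.p k Q v) = 1 := by
  have h := PathAlg.mk_rel k Q (PathRel.sum_vertex)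
  simpa [map_sum, PathAlg.p] using h

theorem PathAlg.arrow_mul_tgt (e : Q.A) :
    PathAlg.arrow k Q e * PathAlg.p k Q (Q.tgt e) = PathAlg.arrow k Q e := by
  have h := PathAlg.mk_rel k Q (PathRel.mul_tgt e)
  simpa [map_mul, PathAlg.p, PathAlg.arrow] using h

theorem PathAlg.src_mul_arrow (e : Q.A) :
    PathAlg.p k Q (Q.src e) * PathAlg.arrow k Q e = PathAlg.arrow k Q e := by
  have h := PathAlg.mk_rel k Q (PathRel.src_mul e)
  simpa [map_mul, PathAlg.p, PathAlg.arrow] using h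

/-- The set of vertices `{p v | v ∈ Q.V}` of the path algebra, as a finite set. -/
noncomputable def vertexFinset : Finset (PathAlg k Q) :=
  letI := Classical.decEq (PathAlg k Q)
  Finset.univ.image (PathAlg.p k Q)

end LPA

namespace LPA

/-- Generators of the Leavitt path algebra: vertex idempotents, arrows, and ghost arrows. -/
inductive LGen (Q : FinQuiver) : Type
  | vertex (v : Q.V) : LGen Q
  | edge (e : Q.A) : LGen Q
  | ghost (e : Q.A) : LGen Q

/-- Defining relations of the Leavitt path algebra `L_k(E)`: (V), (E1), (E2), (CK1), (CK2),
together with `∑ p_v = 1`. -/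
inductive LeavittRel (k : Type) [CommRing k] (Q : FinQuiver) :
    FreeAlgebra k (LGen Q) → FreeAlgebra k (LGen Q) → Prop
  | vertex_mul_self (v : Q.V) :
      LeavittRel k Q (FreeAlgebra.ι k (LGen.vertex v) * FreeAlgebra.ι k (LGen.vertex v))
        (FreeAlgebra.ι k (LGen.vertex v))
  | vertex_mul_ne (v w : Q.V) (h : v ≠ w) :
      LeavittRel k Q (FreeAlgebra.ι k (LGen.vertex v) * FreeAlgebra.ι k (LGen.vertex w)) 0
  | sum_vertex :
      LeavittRel k Q (∑ v : Q.V, FreeAlgebra.ι k (LGen.vertex v)) 1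
  | src_mul (e : Q.A) :
      LeavittRel k Q (FreeAlgebra.ι k (LGen.vertex (Q.src e)) * FreeAlgebra.ι k (LGen.edge e))
        (FreeAlgebra.ι k (LGen.edge e))
  | mul_tgt (e : Q.A) :
      LeavittRel k Q (FreeAlgebra.ι k (LGen.edge e) * FreeAlgebra.ι k (LGen.vertex (Q.tgt e)))
        (FreeAlgebra.ι k (LGen.edge e))
  | tgt_mul_ghost (e : Q.A) :
      LeavittRel k Q (FreeAlgebra.ι k (LGen.vertex (Q.tgt e)) * FreeAlgebra.ι k (LGen.ghost e))
        (FreeAlgebra.ι k (LGen.ghost e))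
  | ghost_mul_src (e : Q.A) :
      LeavittRel k Q (FreeAlgebra.ι k (LGen.ghost e) * FreeAlgebra.ι k (LGen.vertex (Q.src e)))
        (FreeAlgebra.ι k (LGen.ghost e))
  | ghost_mul_edge_self (e : Q.A) :
      LeavittRel k Q (FreeAlgebra.ι k (LGen.ghost e) * FreeAlgebra.ι k (LGen.edge e))
        (FreeAlgebra.ι k (LGen.vertex (Q.tgt e)))
  | ghost_mul_edge_ne (e f : Q.A) (h : e ≠ f) :
      LeavittRel k Q (FreeAlgebra.ι k (LGen.ghost e) * FreeAlgebra.ι k (LGen.edge f)) 0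
  | cuntz_krieger (v : Q.V) (h : ∃ e : Q.A, Q.src e = v) :
      LeavittRel k Q
        (∑ e ∈ Finset.univ.filter (fun e : Q.A => Q.src e = v),
          FreeAlgebra.ι k (LGen.edge e) * FreeAlgebra.ι k (LGen.ghost e))
        (FreeAlgebra.ι k (LGen.vertex v))

/-- The Leavitt path algebra `L_k(E)`. -/
def Leavitt (k : Type) [CommRing k] (Q : FinQuiver) : Type :=
  RingQuot (LeavittRel k Q)

variable (k : Type) [CommRing k] (Q : FinQuiver)

noncomputable instance : Ring (Leavitt k Q) :=
  inferInstanceAs (Ring (RingQuot (LeavittRel k Q)))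

noncomputable instance : Algebra k (Leavitt k Q) :=
  inferInstanceAs (Algebra k (RingQuot (LeavittRel k Q)))

/-- The quotient map from the free algebra onto the Leavitt path algebra. -/
noncomputable def Leavitt.mk : FreeAlgebra k (LGen Q) →ₐ[k] Leavitt k Q :=
  RingQuot.mkAlgHom k (LeavittRel k Q)

/-- The vertex idempotent `p v` in the Leavitt path algebra. -/
noncomputable def Leavitt.p (v : Q.V) : Leavitt k Q :=
  Leavitt.mk k Q (FreeAlgebra.ι k (LGen.vertex v))

/-- The arrow `e` in the Leavitt path algebra. -/
noncomputable def Leavitt.ed (e : Q.A) : Leavitt k Q :=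
  Leavitt.mk k Q (FreeAlgebra.ι k (LGen.edge e))

/-- The ghost arrow `ē` in the Leavitt path algebra. -/
noncomputable def Leavitt.gh (e : Q.A) : Leavitt k Q :=
  Leavitt.mk k Q (FreeAlgebra.ι k (LGen.ghost e))

theorem Leavitt.mk_rel {x y : FreeAlgebra k (LGen Q)} (h : LeavittRel k Q x y) :
    Leavitt.mk k Q x = Leavitt.mk k Q y :=
  RingQuot.mkAlgHom_rel k h

theorem Leavitt.p_mul_self (v : Q.V) : Leavitt.p k Q v * Leavitt.p k Q v = Leavitt.p k Q v := by
  have h := Leavitt.mk_rel k Q (LeavittRel.vertex_mul_self v)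
  simpa [map_mul, Leavitt.p] using h

theorem Leavitt.p_mul_ne (v w : Q.V) (hvw : v ≠ w) :
    Leavitt.p k Q v * Leavitt.p k Q w = 0 := by
  have h := Leavitt.mk_rel k Q (LeavittRel.vertex_mul_ne v w hvw)
  simpa [map_mul, Leavitt.p] using h

theorem Leavitt.sum_p : (∑ v : Q.V, Leavitt.p k Q v) = 1 := by
  have h := Leavitt.mk_rel k Q (LeavittRel.sum_vertex)
  simpa [map_sum, Leavitt.p] using h

theorem Leavitt.tgt_mul_gh (e : Q.A) :
    Leavitt.p k Q (Q.tgt e) * Leavitt.gh k Q e = Leavitt.gh k Q e := by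
  have h := Leavitt.mk_rel k Q (LeavittRel.tgt_mul_ghost e)
  simpa [map_mul, Leavitt.p, Leavitt.gh] using h

theorem Leavitt.gh_mul_src (e : Q.A) :
    Leavitt.gh k Q e * Leavitt.p k Q (Q.src e) = Leavitt.gh k Q e := by
  have h := Leavitt.mk_rel k Q (LeavittRel.ghost_mul_src e)
  simpa [map_mul, Leavitt.p, Leavitt.gh] using h

/-- The canonical embedding `P_k(Ē) → L_k(E)` of the path algebra of the inverse quiver into
the Leavitt path algebra, sending `p v ↦ p v` and each reversed arrow `ē ↦ ē`. -/
noncomputable def revToLeavitt : PathAlg k Q.rev →ₐ[k] Leavitt k Q :=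
  RingQuot.liftAlgHom k ⟨((FreeAlgebra.lift k fun g =>
    match g with
    | PathGen.vertex v => Leavitt.p k Q v
    | PathGen.edge e => Leavitt.gh k Q e : FreeAlgebra k (PathGen Q.rev) →ₐ[k] Leavitt k Q)), by
      intro x y h
      induction h with
      | vertex_mul_self v =>
          simp only [map_mul, FreeAlgebra.lift_ι_apply]
          exact Leavitt.p_mul_self k Q v
      | vertex_mul_ne v w h =>
          simp only [map_mul, map_zero, FreeAlgebra.lift_ι_apply]
          exact Leavitt.p_mul_ne k Q v w h
      | sum_vertex =>
          simp only [map_sum, map_one, FreeAlgebra.lift_ι_apply]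
          exact Leavitt.sum_p k Q
      | src_mul e =>
          simp only [map_mul, FreeAlgebra.lift_ι_apply]
          exact Leavitt.tgt_mul_gh k Q e
      | mul_tgt e =>
          simp only [map_mul, FreeAlgebra.lift_ι_apply]
          exact Leavitt.gh_mul_src k Q e⟩

/-- The canonical embedding `P_k(E) → L_k(E)` of the path algebra into the Leavitt path
algebra, sending `p v ↦ p v` and each arrow `e ↦ e`. -/
noncomputable def pathToLeavitt : PathAlg k Q →ₐ[k] Leavitt k Q :=
  RingQuot.liftAlgHom k ⟨((FreeAlgebra.lift k fun g =>
    match g with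
    | PathGen.vertex v => Leavitt.p k Q v
    | PathGen.edge e => Leavitt.ed k Q e : FreeAlgebra k (PathGen Q) →ₐ[k] Leavitt k Q)), by
      intro x y h
      induction h with
      | vertex_mul_self v =>
          simp only [map_mul, FreeAlgebra.lift_ι_apply]
          exact Leavitt.p_mul_self k Q v
      | vertex_mul_ne v w h =>
          simp only [map_mul, map_zero, FreeAlgebra.lift_ι_apply]
          exact Leavitt.p_mul_ne k Q v w h
      | sum_vertex =>
          simp only [map_sum, map_one, FreeAlgebra.lift_ι_apply]
          exact Leavitt.sum_p k Q
      | src_mul e =>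
          simp only [map_mul, FreeAlgebra.lift_ι_apply]
          have h := Leavitt.mk_rel k Q (LeavittRel.src_mul e)
          simpa [map_mul, Leavitt.p, Leavitt.ed] using h
      | mul_tgt e =>
          simp only [map_mul, FreeAlgebra.lift_ι_apply]
          have h := Leavitt.mk_rel k Q (LeavittRel.mul_tgt e)
          simpa [map_mul, Leavitt.p, Leavitt.ed] using h⟩

end LPA

namespace LPA

open TensorProduct

variable (P L : Type) [Ring P] [Ring L] (φ : P →+* L)

/-- The subgroup of relations defining the balanced tensor product `L ⊗_P M` (where `L` is a
right `P`-module via `φ` and `M` a left `P`-module) as a quotient of `L ⊗_ℤ M`. -/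
noncomputable def trel (M : Type) [AddCommGroup M] [Module P M] :
    Submodule L (TensorProduct ℤ L M) :=
  Submodule.span L
    {z | ∃ (l : L) (p : P) (m : M), z = (l * φ p) ⊗ₜ[ℤ] m - l ⊗ₜ[ℤ] (p • m)}

/-- The balanced tensor product `L ⊗_P M`, a left `L`-module. -/
abbrev TensorPhi (M : Type) [AddCommGroup M] [Module P M] : Type :=
  TensorProduct ℤ L M ⧸ trel P L φ M

/-- Functoriality of `L ⊗_P -` : the map induced on balanced tensor products by a `P`-linear
map `f : M → N`. -/
noncomputable def tmap {M N : Type} [AddCommGroup M] [Module P M] [AddCommGroup N]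
    [Module P N] (f : M →ₗ[P] N) : TensorPhi P L φ M →ₗ[L] TensorPhi P L φ N :=
  Submodule.mapQ _ _
    (TensorProduct.AlgebraTensorModule.map (LinearMap.id : L →ₗ[L] L)
      f.toAddMonoidHom.toIntLinearMap)
    (by
      refine Submodule.span_le.mpr ?_
      rintro z ⟨l, p, m, rfl⟩
      simp only [SetLike.mem_coe, Submodule.mem_comap, map_sub,
        TensorProduct.AlgebraTensorModule.map_tmul, LinearMap.id_coe, id_eq,
        AddMonoidHom.coe_toIntLinearMap, LinearMap.toAddMonoidHom_coe]
      exact Submodule.subset_span ⟨l, p, f m, by rw [f.map_smul]⟩)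

/-- `L` is flat as a right `P`-module (via `φ : P → L`): the functor `L ⊗_P -` preserves
injectivity. -/
def RightFlat : Prop :=
  ∀ (M N : Type) [AddCommGroup M] [Module P M] [AddCommGroup N] [Module P N],
    ∀ f : M →ₗ[P] N, Function.Injective f → Function.Injective (tmap P L φ f)

end LPA

namespace LPA

/-- A module over a ring `R`, bundled with its structure. -/
structure ModuleOver (R : Type) [Ring R] : Type 1 where
  carrier : Type
  [acg : AddCommGroup carrier]
  [mod : Module R carrier]

attribute [instance] ModuleOver.acg ModuleOver.mod

/-- Finite-dimensionality over `k` of a bundled `R`-module, for a `k`-algebra `R` (the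
`k`-structure being obtained by restriction of scalars). -/
def FinDimOver (k R : Type) [Field k] [Ring R] [Algebra k R] (X : ModuleOver R) : Prop :=
  letI : Module k X.carrier := Module.compHom X.carrier (algebraMap k R)
  FiniteDimensional k X.carrier

/-- There is a short exact sequence `0 → A → B → C → 0` of `R`-modules. -/
def IsSES {R : Type} [Ring R] (A B C : ModuleOver R) : Prop :=
  ∃ (f : A.carrier →ₗ[R] B.carrier) (g : B.carrier →ₗ[R] C.carrier),
    Function.Injective f ∧ Function.Surjective g ∧ LinearMap.range f = LinearMap.ker g

/-- The subgroup of relations defining `K₀` of the full subcategory determined by the class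
`C` of `R`-modules: `[B] = [A] + [C]` for every short exact sequence `0 → A → B → C → 0` of
objects of the class. -/
def K0Rel (R : Type) [Ring R] (C : ModuleOver R → Prop) :
    AddSubgroup (FreeAbelianGroup {X : ModuleOver R // C X}) :=
  AddSubgroup.closure
    {z | ∃ A B X : {X : ModuleOver R // C X}, IsSES A.1 B.1 X.1 ∧
      z = FreeAbelianGroup.of B - FreeAbelianGroup.of A - FreeAbelianGroup.of X}

/-- The Grothendieck group `K₀` of the class `C` of `R`-modules: the free abelian group on
its members, modulo the relation `[B] = [A] + [C]` for short exact sequences. -/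
abbrev K0 (R : Type) [Ring R] (C : ModuleOver R → Prop) : Type 1 :=
  FreeAbelianGroup {X : ModuleOver R // C X} ⧸ K0Rel R C

/-- The class `[X] ∈ K₀` of a module of the class `C`. -/
def K0.cls {R : Type} [Ring R] {C : ModuleOver R → Prop} {X : ModuleOver R} (hX : C X) :
    K0 R C :=
  QuotientAddGroup.mk (FreeAbelianGroup.of ⟨X, hX⟩)

/-- The class of finitely generated projective `R`-modules; `K₀` of this class is `K₀(R)`. -/
def ProjClass (R : Type) [Ring R] (X : ModuleOver R) : Prop :=
  Module.Finite R X.carrier ∧ Module.Projective R X.carrier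

/-- The class of finitely presented `R`-modules; `K₀` of this class is `K₀(fp(R))`. -/
def FpClass (R : Type) [Ring R] (X : ModuleOver R) : Prop :=
  Module.FinitePresentation R X.carrier

end LPA

namespace LPA

variable (k : Type) [Field k] (Q : FinQuiver)

/-- The class `𝓜` of finitely presented left `P_k(Ē)`-modules killed by
`L_k(E) ⊗_{P_k(Ē)} -`. -/
def MClass (X : ModuleOver (PathAlg k Q.rev)) : Prop :=
  Module.FinitePresentation (PathAlg k Q.rev) X.carrier ∧
    Subsingleton
      (TensorPhi (PathAlg k Q.rev) (Leavitt k Q) (revToLeavitt k Q).toRingHom X.carrier)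

/-- The class `fpl` of finitely presented left `P_k(Ē)`-modules of finite length. -/
def FplClass (X : ModuleOver (PathAlg k Q.rev)) : Prop :=
  Module.FinitePresentation (PathAlg k Q.rev) X.carrier ∧
    IsFiniteLength (PathAlg k Q.rev) X.carrier

end LPA

/-!
A module over `P = P_k(Ē)` is killed by `L ⊗_P -` iff every element is path-torsion: annihilated
by all sufficiently long paths and by all paths starting at a vertex that receives no arrow of `Ē`.
Indeed the relation `p_v = ∑ e ē` forces a path-torsion element to vanish in every `L`-module;
conversely `m ↦ (q ↦ q • m)` maps a `P`-module `M` to the `L`-module of germs of `M`-valued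
functions on paths, and its kernel consists exactly of the path-torsion elements.

There are only finitely many paths of bounded length, so a finitely generated module of this kind
is finite-dimensional; conversely a finite-dimensional module is finitely presented because `P` is
of finite type. This makes `𝓜` a Serre class. Finally, by Jordan–Hölder, sending a module of finite
length to the sum of the classes of those of its composition factors that lie in `𝓜` is a left
inverse of `K₀(𝓜) → K₀(fpl(P))`, and `K₀(𝓜)` is generated by the simple modules in `𝓜`.
-/

namespace LPA

section JordanHolder

variable {R : Type} [Ring R] {G : Type*} [AddCommGroup G]
variable {M N : Type} [AddCommGroup M] [Module R M] [AddCommGroup N] [Module R N]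

/-- The subquotient `Y / (X ∩ Y)` of a module as a bundled module; it is used for `X ≤ Y`. -/
def ModuleOver.subquotient (X Y : Submodule R M) : ModuleOver R :=
  ⟨Y ⧸ X.submoduleOf Y⟩

/-- An isomorphism invariant of `R`-modules with values in `G`. -/
def IsIsoInvariant (f : ModuleOver R → G) : Prop :=
  ∀ X Y : ModuleOver R, Nonempty (X.carrier ≃ₗ[R] Y.carrier) → f X = f Y

/-- The sum of the invariant `f` over the factors of a composition series. -/
def factorSum (f : ModuleOver R → G)
    (s : CompositionSeries (Submodule R M)) : G :=
  ∑ i : Fin s.length, f (.subquotient (s i.castSucc) (s i.succ))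

open Classical in
/-- The sum of the invariant `f` over the composition factors of a module, counted with
multiplicity; the value is `0` on modules of infinite length. -/
noncomputable def jordanHolderSum (f : ModuleOver R → G) (X : ModuleOver R) : G :=
  if h : ∃ s : CompositionSeries (Submodule R X.carrier), s.head = ⊥ ∧ s.last = ⊤ then
    factorSum f h.choose
  else 0

theorem nonempty_quotient_comap_equiv {h : M →ₗ[R] N} (hh : Function.Surjective h)
    (p : Submodule R N) : Nonempty ((M ⧸ p.comap h) ≃ₗ[R] N ⧸ p) := by
  have hker : p.comap h = LinearMap.ker (p.mkQ ∘ₗ h) := by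
    rw [LinearMap.ker_comp, Submodule.ker_mkQ]
  exact ⟨(Submodule.quotEquivOfEq _ _ hker).trans
    (LinearMap.quotKerEquivOfSurjective _ (p.mkQ_surjective.comp hh))⟩

theorem nonempty_subquotient_equiv_map {i : M →ₗ[R] N} (hi : Function.Injective i)
    (X Y : Submodule R M) :
    Nonempty ((ModuleOver.subquotient X Y).carrier ≃ₗ[R]
      (ModuleOver.subquotient (X.map i) (Y.map i)).carrier) := by
  have hcomap : ((X.map i).submoduleOf (Y.map i)).comap (i.submoduleMap Y) = X.submoduleOf Y := by
    ext y
    exact hi.mem_set_image (s := X)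
  obtain ⟨e⟩ := nonempty_quotient_comap_equiv (i.submoduleMap_surjective Y)
    ((X.map i).submoduleOf (Y.map i))
  exact ⟨(Submodule.quotEquivOfEq _ _ hcomap.symm).trans e⟩

theorem nonempty_subquotient_equiv_comap {g : M →ₗ[R] N} (hg : Function.Surjective g)
    (X Y : Submodule R N) :
    Nonempty ((ModuleOver.subquotient X Y).carrier ≃ₗ[R]
      (ModuleOver.subquotient (X.comap g) (Y.comap g)).carrier) := by
  have hrestrict : Function.Surjective (g.restrict (p := Y.comap g) (q := Y) fun _ hx => hx) := by
    intro y
    obtain ⟨x, hx⟩ := hg y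
    exact ⟨⟨x, by simp [hx]⟩, Subtype.ext hx⟩
  obtain ⟨e⟩ := nonempty_quotient_comap_equiv hrestrict (X.submoduleOf Y)
  exact ⟨e.symm⟩

variable {f : ModuleOver R → G}

theorem IsIsoInvariant.factorSum_eq (hf : IsIsoInvariant f)
    (s t : CompositionSeries (Submodule R M)) (hhead : s.head = t.head) (hlast : s.last = t.last) :
    factorSum f s = factorSum f t := by
  obtain ⟨e, he⟩ := CompositionSeries.jordan_holder s t hhead hlast
  exact Fintype.sum_equiv e _ _ fun i => hf _ _ ⟨(he i).linearEquiv⟩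

theorem IsIsoInvariant.exists_factorSum_eq_of_monotone (hf : IsIsoInvariant f)
    {φ : Submodule R M → Submodule R N} (hmono : Monotone φ)
    (hφ : ∀ X Y, Nonempty ((ModuleOver.subquotient X Y).carrier ≃ₗ[R]
      (ModuleOver.subquotient (φ X) (φ Y)).carrier))
    (s : CompositionSeries (Submodule R M)) :
    ∃ t : CompositionSeries (Submodule R N), t.head = φ s.head ∧ t.last = φ s.last ∧
      factorSum f t = factorSum f s := by
  have hstep : ∀ i : Fin s.length, φ (s i.castSucc) ⋖ φ (s i.succ) := by
    intro i
    have hcov : s i.castSucc ⋖ s i.succ := s.step i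
    obtain ⟨e⟩ := hφ (s i.castSucc) (s i.succ)
    have hsimple : IsSimpleModule R (ModuleOver.subquotient (s i.castSucc) (s i.succ)).carrier :=
      (covBy_iff_quot_is_simple hcov.le).mp hcov
    exact (covBy_iff_quot_is_simple (hmono hcov.le)).mpr (IsSimpleModule.congr e.symm)
  exact ⟨⟨s.length, fun i => φ (s i), hstep⟩, rfl, rfl,
    Finset.sum_congr rfl fun i _ => (hf _ _ (hφ _ _)).symm⟩

theorem factorSum_smash (f : ModuleOver R → G)
    (s t : CompositionSeries (Submodule R M)) (h : s.last = t.head) :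
    factorSum f (s.smash t h) = factorSum f s + factorSum f t := by
  refine (Fin.sum_univ_add (a := s.length) (b := t.length) _).trans (congrArg₂ _ ?_ ?_)
  · exact Finset.sum_congr rfl fun i _ => congrArg f <|
      congrArg₂ ModuleOver.subquotient (RelSeries.smash_castAdd h i)
        (RelSeries.smash_succ_castAdd h i)
  · exact Finset.sum_congr rfl fun i _ => congrArg f <|
      congrArg₂ ModuleOver.subquotient (RelSeries.smash_natAdd h i)
        (RelSeries.smash_succ_natAdd h i)

theorem IsIsoInvariant.jordanHolderSum_eq (hf : IsIsoInvariant f) {X : ModuleOver R}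
    (s : CompositionSeries (Submodule R X.carrier)) (hhead : s.head = ⊥) (hlast : s.last = ⊤) :
    jordanHolderSum f X = factorSum f s := by
  have h : ∃ s : CompositionSeries (Submodule R X.carrier), s.head = ⊥ ∧ s.last = ⊤ :=
    ⟨s, hhead, hlast⟩
  rw [jordanHolderSum, dif_pos h]
  exact hf.factorSum_eq _ _ (h.choose_spec.1.trans hhead.symm) (h.choose_spec.2.trans hlast.symm)

theorem IsIsoInvariant.jordanHolderSum_add (hf : IsIsoInvariant f) {A B C : ModuleOver R}
    (hA : IsFiniteLength R A.carrier) (hC : IsFiniteLength R C.carrier) (h : IsSES A B C) :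
    jordanHolderSum f B = jordanHolderSum f A + jordanHolderSum f C := by
  obtain ⟨i, g, hi, hg, hexact⟩ := h
  obtain ⟨s, shead, slast⟩ := isFiniteLength_iff_exists_compositionSeries.mp hA
  obtain ⟨t, thead, tlast⟩ := isFiniteLength_iff_exists_compositionSeries.mp hC
  obtain ⟨s', shead', slast', hs⟩ := hf.exists_factorSum_eq_of_monotone
    (φ := Submodule.map i) (fun _ _ => Submodule.map_mono) (nonempty_subquotient_equiv_map hi) s
  obtain ⟨t', thead', tlast', ht⟩ := hf.exists_factorSum_eq_of_monotone
    (φ := Submodule.comap g) (fun _ _ => Submodule.comap_mono)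
    (nonempty_subquotient_equiv_comap hg) t
  have hmeet : s'.last = t'.head := by
    rw [slast', thead', slast, thead, Submodule.map_top, hexact, Submodule.comap_bot]
  rw [hf.jordanHolderSum_eq s shead slast, hf.jordanHolderSum_eq t thead tlast, ← hs, ← ht,
    ← factorSum_smash f s' t' hmeet]
  refine hf.jordanHolderSum_eq _ ?_ ?_
  · rw [RelSeries.head_smash, shead', shead, Submodule.map_bot]
  · rw [RelSeries.last_smash, tlast', tlast, Submodule.comap_top]

theorem IsIsoInvariant.jordanHolderSum_of_isSimpleModule (hf : IsIsoInvariant f)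
    (X : ModuleOver R) [IsSimpleModule R X.carrier] : jordanHolderSum f X = f X := by
  have hcov : (⊥ : Submodule R X.carrier) ⋖ ⊤ := bot_covBy_top
  obtain ⟨e⟩ := nonempty_quotient_comap_equiv (M := (⊤ : Submodule R X.carrier))
    (h := Submodule.subtype ⊤) (fun x => ⟨⟨x, trivial⟩, rfl⟩) ⊥
  rw [hf.jordanHolderSum_eq ⟨1, ![⊥, ⊤], fun i => by fin_cases i; exact hcov⟩ rfl rfl]
  exact (Fin.sum_univ_one _).trans (hf _ _ ⟨e.trans (Submodule.quotEquivOfEqBot _ rfl)⟩)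

end JordanHolder

section GrothendieckGroup

variable {R : Type} [Ring R] {C D : ModuleOver R → Prop} {X Y Z : ModuleOver R}

/-- A Serre class in the category of all `R`-modules: in a short exact sequence the middle term
belongs to the class iff both outer terms do. -/
def IsSerreClass (C : ModuleOver R → Prop) : Prop :=
  ∀ X Y Z : ModuleOver R, IsSES X Y Z → (C Y ↔ C X ∧ C Z)

variable (R) in
/-- The zero module as a bundled module. -/
def ModuleOver.zero : ModuleOver R :=
  ⟨PUnit⟩

instance : Subsingleton (ModuleOver.zero R).carrier :=
  inferInstanceAs (Subsingleton PUnit)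

theorem isSES_submodule {M : Type} [AddCommGroup M] [Module R M] (N : Submodule R M) :
    IsSES (⟨N⟩ : ModuleOver R) ⟨M⟩ ⟨M ⧸ N⟩ :=
  ⟨N.subtype, N.mkQ, N.injective_subtype, N.mkQ_surjective, by simp⟩

theorem isSES_zero_left (X : ModuleOver R) : IsSES (ModuleOver.zero R) X X :=
  ⟨0, LinearMap.id, fun _ _ _ => Subsingleton.elim _ _, Function.surjective_id, by simp⟩

theorem isSES_of_linearEquiv (e : X.carrier ≃ₗ[R] Y.carrier) (Z : ModuleOver R)
    [Subsingleton Z.carrier] : IsSES X Y Z :=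
  ⟨e, 0, e.injective, fun z => ⟨0, Subsingleton.elim _ _⟩, by simp⟩

theorem IsSerreClass.zero (hC : IsSerreClass C) (hX : C X) : C (ModuleOver.zero R) :=
  ((hC _ _ _ (isSES_zero_left X)).mp hX).1

theorem IsSerreClass.of_linearEquiv (hC : IsSerreClass C) (e : X.carrier ≃ₗ[R] Y.carrier)
    (hX : C X) : C Y :=
  (hC _ _ _ (isSES_of_linearEquiv e (.zero R))).mpr ⟨hX, hC.zero hX⟩

namespace K0

theorem cls_add (hX : C X) (hY : C Y) (hZ : C Z) (h : IsSES X Y Z) :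
    cls hY = cls hX + cls hZ := by
  rw [← sub_eq_zero, ← sub_sub]
  exact (QuotientAddGroup.eq_zero_iff _).mpr
    (AddSubgroup.subset_closure ⟨⟨X, hX⟩, ⟨Y, hY⟩, ⟨Z, hZ⟩, h, rfl⟩)

theorem cls_of_subsingleton (hX : C X) [Subsingleton X.carrier] : cls hX = 0 := by
  simpa using cls_add hX hX hX (isSES_of_linearEquiv (LinearEquiv.refl R _) X)

theorem cls_eq_of_linearEquiv (hC : IsSerreClass C) (hX : C X) (hY : C Y)
    (e : X.carrier ≃ₗ[R] Y.carrier) : cls hX = cls hY := by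
  rw [cls_add hX hY (hC.zero hX) (isSES_of_linearEquiv e _),
    cls_of_subsingleton (hC.zero hX), add_zero]

/-- The universal property of `K₀`: an additive function on the class extends to a homomorphism
on `K₀`. -/
def lift {G : Type*} [AddCommGroup G] (f : ∀ X, C X → G)
    (hf : ∀ X Y Z (hX : C X) (hY : C Y) (hZ : C Z), IsSES X Y Z → f Y hY = f X hX + f Z hZ) :
    K0 R C →+ G :=
  QuotientAddGroup.lift _ (FreeAbelianGroup.lift fun X => f X.1 X.2) <| by
    rw [K0Rel, AddSubgroup.closure_le]
    rintro _ ⟨A, B, X, h, rfl⟩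
    simp [hf _ _ _ A.2 B.2 X.2 h]

theorem lift_cls {G : Type*} [AddCommGroup G] (f : ∀ X, C X → G)
    (hf : ∀ X Y Z (hX : C X) (hY : C Y) (hZ : C Z), IsSES X Y Z → f Y hY = f X hX + f Z hZ)
    (hX : C X) : lift f hf (cls hX) = f X hX :=
  FreeAbelianGroup.lift_apply_of _ _

/-- The homomorphism `K₀(C) → K₀(D)` induced by an inclusion of classes of modules. -/
def map (hCD : ∀ X, C X → D X) : K0 R C →+ K0 R D :=
  lift (fun X hX => cls (hCD X hX)) fun _ _ _ _ _ _ h => cls_add _ _ _ h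

theorem map_cls (hCD : ∀ X, C X → D X) (hX : C X) : map hCD (cls hX) = cls (hCD X hX) :=
  lift_cls _ _ hX

theorem cls_mem_closure_isSimpleModule (hC : IsSerreClass C) {M : Type} [AddCommGroup M]
    [Module R M] (hM : IsFiniteLength R M) (h : C ⟨M⟩) :
    (cls h : K0 R C) ∈ AddSubgroup.closure
      {x | ∃ (X : ModuleOver R) (hX : C X), IsSimpleModule R X.carrier ∧ x = cls hX} := by
  induction hM with
  | @of_subsingleton M _ _ hM =>
    have : Subsingleton (⟨M⟩ : ModuleOver R).carrier := hM
    rw [cls_of_subsingleton h]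
    exact zero_mem _
  | @of_simple_quotient M _ _ N hsimple _ ih =>
    obtain ⟨hN, hMN⟩ := (hC _ _ _ (isSES_submodule N)).mp h
    rw [cls_add hN h hMN (isSES_submodule N)]
    exact add_mem (ih hN) (AddSubgroup.subset_closure ⟨_, hMN, hsimple, rfl⟩)

theorem closure_isSimpleModule_eq_top (hC : IsSerreClass C)
    (hlen : ∀ X, C X → IsFiniteLength R X.carrier) :
    AddSubgroup.closure {x : K0 R C | ∃ (X : ModuleOver R) (hX : C X),
      IsSimpleModule R X.carrier ∧ x = cls hX} = ⊤ := by
  refine (AddSubgroup.eq_top_iff' _).mpr fun x => ?_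
  induction x using QuotientAddGroup.induction_on with | H x => ?_
  induction x using FreeAbelianGroup.induction_on with
  | zero => exact zero_mem _
  | of X => exact cls_mem_closure_isSimpleModule hC (hlen X.1 X.2) X.2
  | neg X h => exact neg_mem h
  | add x y hx hy => exact add_mem hx hy

open Classical in
theorem isIsoInvariant_cls (hC : IsSerreClass C) :
    IsIsoInvariant fun X => if hX : C X then (cls hX : K0 R C) else 0 := by
  rintro X Y ⟨e⟩
  by_cases hX : C X
  · have hY : C Y := hC.of_linearEquiv e hX
    simp only [hX, hY, dite_true, cls_eq_of_linearEquiv hC hX hY e]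
  · have hY : ¬ C Y := fun hY => hX (hC.of_linearEquiv e.symm hY)
    simp only [hX, hY, dite_false]

open Classical in
theorem map_injective (hCD : ∀ X, C X → D X) (hlen : ∀ X, D X → IsFiniteLength R X.carrier)
    (hC : IsSerreClass C) : Function.Injective (map hCD) := by
  have hinv := isIsoInvariant_cls hC
  let retraction : K0 R D →+ K0 R C :=
    lift (fun X _ => jordanHolderSum (fun X => if hX : C X then (cls hX : K0 R C) else 0) X)
      fun X _ Z hX _ hZ h => hinv.jordanHolderSum_add (hlen X hX) (hlen Z hZ) h
  have hretraction : retraction.comp (map hCD) = AddMonoidHom.id (K0 R C) := by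
    refine AddMonoidHom.eq_of_eqOn_dense
      (closure_isSimpleModule_eq_top hC fun X hX => hlen X (hCD X hX)) ?_
    rintro _ ⟨X, hX, hsimple, rfl⟩
    rw [AddMonoidHom.comp_apply, map_cls, lift_cls, hinv.jordanHolderSum_of_isSimpleModule,
      dif_pos hX, AddMonoidHom.id_apply]
  exact Function.LeftInverse.injective (DFunLike.congr_fun hretraction)

theorem range_map (hCD : ∀ X, C X → D X) (hlen : ∀ X, C X → IsFiniteLength R X.carrier)
    (hC : IsSerreClass C) :
    (map hCD).range = AddSubgroup.closure {x | ∃ (X : ModuleOver R) (hX : D X),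
      IsSimpleModule R X.carrier ∧ C X ∧ x = cls hX} := by
  rw [AddMonoidHom.range_eq_map, ← closure_isSimpleModule_eq_top hC hlen,
    AddMonoidHom.map_closure]
  congr 1
  ext x
  constructor
  · rintro ⟨_, ⟨X, hX, hsimple, rfl⟩, rfl⟩
    exact ⟨X, hCD X hX, hsimple, hX, map_cls hCD hX⟩
  · rintro ⟨X, _, hsimple, hX, rfl⟩
    exact ⟨_, ⟨X, hX, hsimple, rfl⟩, map_cls hCD hX⟩

end K0

end GrothendieckGroup

section FiniteType

variable {k A : Type*} [CommRing k] [Ring A] [Algebra k A]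

theorem smul_mem_of_adjoin_eq_top {F : Type*} [AddCommGroup F] [Module k F] [Module A F]
    [IsScalarTower k A F] {S : Set A} (hS : Algebra.adjoin k S = ⊤) {W : Submodule k F}
    (hW : ∀ s ∈ S, ∀ w ∈ W, s • w ∈ W) (a : A) {w : F} (hw : w ∈ W) : a • w ∈ W := by
  have ha : a ∈ Algebra.adjoin k S := hS ▸ Algebra.mem_top
  induction ha using Algebra.adjoin_induction generalizing w with
  | mem s hs => exact hW s hs w hw
  | algebraMap r => rw [algebraMap_smul]; exact W.smul_mem r hw
  | add a b _ _ ha hb => rw [add_smul]; exact W.add_mem (ha hw) (hb hw)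
  | mul a b _ _ ha hb => rw [mul_smul]; exact ha (hb hw)

theorem sup_restrictScalars_eq_top {F : Type*} [AddCommGroup F] [Module k F] [Module A F]
    [IsScalarTower k A F] {S : Set A} (hS : Algebra.adjoin k S = ⊤) {W : Submodule k F}
    {N : Submodule A F} (hW : ∀ s ∈ S, ∀ w ∈ W, s • w ∈ W ⊔ N.restrictScalars k)
    (hspan : Submodule.span A (W : Set F) = ⊤) : W ⊔ N.restrictScalars k = ⊤ := by
  have hstable : ∀ s ∈ S, ∀ x ∈ W ⊔ N.restrictScalars k, s • x ∈ W ⊔ N.restrictScalars k := by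
    intro s hs x hx
    obtain ⟨w, hw, n, hn, rfl⟩ := Submodule.mem_sup.mp hx
    rw [smul_add]
    exact add_mem (hW s hs w hw) (Submodule.mem_sup_right (N.smul_mem s hn))
  refine Submodule.eq_top_iff'.mpr fun x => ?_
  have hx : x ∈ Submodule.span A (W : Set F) := hspan ▸ Submodule.mem_top
  induction hx using Submodule.span_induction with
  | mem w hw => exact Submodule.mem_sup_left hw
  | zero => exact zero_mem _
  | add x y _ _ hx hy => exact add_mem hx hy
  | smul a x _ hx => exact smul_mem_of_adjoin_eq_top hS hstable a hx

theorem fg_ker_of_finiteType [Algebra.FiniteType k A] {F M : Type*} [AddCommGroup F] [Module k F]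
    [Module A F] [IsScalarTower k A F] [AddCommGroup M] [Module A M] (π : F →ₗ[A] M)
    {W : Submodule k F} (hW : W.FG) (hspan : Submodule.span A (W : Set F) = ⊤)
    (hπ : ∀ m, ∃ w ∈ W, π w = m) (hker : (W ⊓ (LinearMap.ker π).restrictScalars k).FG) :
    (LinearMap.ker π).FG := by
  obtain ⟨S, hS⟩ := (Algebra.FiniteType.out : (⊤ : Subalgebra k A).FG)
  obtain ⟨T, rfl⟩ := hW
  obtain ⟨U, hU⟩ := hker
  choose c hcW hcπ using hπ
  -- The rewriting rules `s • t ↦ c (π (s • t)) ∈ W` and the relations that hold inside `W`.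
  let relations : Set F := Set.image2 (fun s t => s • t - c (π (s • t))) (S : Set A) (T : Set F) ∪ U
  have hle : Submodule.span A relations ≤ LinearMap.ker π := by
    rw [Submodule.span_le, Set.union_subset_iff, Set.image2_subset_iff]
    refine ⟨fun s _ t _ => ?_, fun u hu => ?_⟩
    · simp [hcπ]
    · exact (hU.le (Submodule.subset_span hu)).2
  have htop :
      Submodule.span k (T : Set F) ⊔ (Submodule.span A relations).restrictScalars k = ⊤ := by
    refine sup_restrictScalars_eq_top hS (fun s hs w hw => ?_) hspan
    induction hw using Submodule.span_induction with
    | mem t ht =>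
      rw [← add_sub_cancel (c (π (s • t))) (s • t)]
      exact Submodule.add_mem_sup (hcW _)
        (Submodule.subset_span (Or.inl (Set.mem_image2_of_mem hs ht)))
    | zero => rw [smul_zero]; exact zero_mem _
    | add x y _ _ hx hy => rw [smul_add]; exact add_mem hx hy
    | smul r x _ hx => rw [smul_algebra_smul_comm]; exact Submodule.smul_mem _ r hx
  have hker_le : LinearMap.ker π ≤ Submodule.span A relations := by
    intro x hx
    obtain ⟨w, hw, n, hn, rfl⟩ := Submodule.mem_sup.mp (htop ▸ Submodule.mem_top : x ∈ _)
    have hwker : w ∈ LinearMap.ker π := by simpa using sub_mem hx (hle hn)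
    have hwU : w ∈ Submodule.span k (U : Set F) := hU.ge ⟨hw, hwker⟩
    exact add_mem (Submodule.span_mono Set.subset_union_right
      (Submodule.span_le_restrictScalars k A _ hwU)) hn
  rw [← le_antisymm hle hker_le]
  exact Submodule.fg_span ((S.finite_toSet.image2 _ T.finite_toSet).union U.finite_toSet)

variable (k A) in
theorem finitePresentation_of_finiteType [Algebra.FiniteType k A] (M : Type*) [AddCommGroup M]
    [Module k M] [Module A M] [IsScalarTower k A M] [Module.FinitePresentation k M] :
    Module.FinitePresentation A M := by
  classical
  obtain ⟨n, _, ρ, _, hρ, -⟩ := Module.FinitePresentation.exists_fin' k M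
  let ψ : (Fin n → k) →ₗ[k] (Fin n → A) := (Algebra.linearMap k A).compLeft (Fin n)
  let π : (Fin n → A) →ₗ[A] M := Fintype.linearCombination A fun j => ρ (Pi.single j 1)
  have hπψ (c) : π (ψ c) = ρ c := by
    simp only [π, ψ, Fintype.linearCombination_apply, LinearMap.compLeft_apply,
      Function.comp_apply, Algebra.linearMap_apply, algebraMap_smul, ← map_smul, ← map_sum]
    exact congrArg ρ (pi_eq_sum_univ' c).symm
  have hπ (m) : ∃ w ∈ LinearMap.range ψ, π w = m :=
    (hρ m).imp' ψ fun c hc => ⟨⟨c, rfl⟩, (hπψ c).trans hc⟩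
  have hspan : Submodule.span A (LinearMap.range ψ : Set (Fin n → A)) = ⊤ := by
    refine eq_top_iff.mpr ((Pi.basisFun A (Fin n)).span_eq.ge.trans (Submodule.span_mono ?_))
    rintro _ ⟨j, rfl⟩
    refine ⟨Pi.single j 1, funext fun i => ?_⟩
    simp [ψ, Pi.basisFun_apply, Pi.single_apply, apply_ite (algebraMap k A)]
  have hker : LinearMap.range ψ ⊓ (LinearMap.ker π).restrictScalars k =
      (LinearMap.ker ρ).map ψ := by
    ext x
    constructor
    · rintro ⟨⟨c, rfl⟩, hc⟩
      exact ⟨c, (hπψ c).symm.trans hc, rfl⟩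
    · rintro ⟨c, hc, rfl⟩
      exact ⟨⟨c, rfl⟩, (hπψ c).trans hc⟩
  refine Module.finitePresentation_of_surjective π (fun m => (hπ m).imp fun _ => And.right) ?_
  refine fg_ker_of_finiteType π (W := LinearMap.range ψ) ?_ hspan hπ ?_
  · exact Module.Finite.iff_fg.mp inferInstance
  · rw [hker]
    exact (Module.FinitePresentation.fg_ker ρ hρ).map ψ

end FiniteType

section PathAlgebra

open scoped Pointwise

variable {k : Type} [CommRing k] {Q : FinQuiver}

/-- A finite quiver as a quiver in the sense of Mathlib: the morphisms from `u` to `v` are the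
arrows with source `u` and target `v`. -/
instance FinQuiver.quiver (Q : FinQuiver) : Quiver Q.V where
  Hom u v := {e : Q.A // Q.src e = u ∧ Q.tgt e = v}

instance : Finite (PathGen Q) :=
  Finite.of_surjective (Sum.elim PathGen.vertex PathGen.edge) fun
    | .vertex v => ⟨.inl v, rfl⟩
    | .edge e => ⟨.inr e, rfl⟩

namespace PathAlg

theorem mk_surjective : Function.Surjective (mk k Q) :=
  RingQuot.mkAlgHom_surjective k (PathRel k Q)

instance : Algebra.FiniteType k (PathAlg k Q) :=
  Algebra.FiniteType.of_surjective (mk k Q) mk_surjective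

@[elab_as_elim]
theorem induction_on {motive : PathAlg k Q → Prop}
    (algebraMap : ∀ c : k, motive (algebraMap k (PathAlg k Q) c))
    (p : ∀ v, motive (p k Q v)) (arrow : ∀ e, motive (arrow k Q e))
    (mul : ∀ a b, motive a → motive b → motive (a * b))
    (add : ∀ a b, motive a → motive b → motive (a + b)) (a : PathAlg k Q) : motive a := by
  obtain ⟨a, rfl⟩ := mk_surjective a
  induction a using FreeAlgebra.induction with
  | grade0 c => simpa only [AlgHom.commutes] using algebraMap c
  | grade1 g => cases g with
    | vertex v => exact p v
    | edge e => exact arrow e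
  | mul a b ha hb => simpa only [map_mul] using mul _ _ ha hb
  | add a b ha hb => simpa only [map_add] using add _ _ ha hb

variable (k) in
/-- The element of the path algebra given by a path, the product of its arrows. -/
noncomputable def ofPath {u v : Q.V} : Quiver.Path u v → PathAlg k Q
  | .nil => p k Q u
  | .cons q e => ofPath q * arrow k Q e.1

theorem ofPath_nil (v : Q.V) : ofPath k (.nil : Quiver.Path v v) = p k Q v := rfl

theorem ofPath_mul_p {u v : Q.V} (q : Quiver.Path u v) (w : Q.V) :
    ofPath k q * p k Q w = if v = w then ofPath k q else 0 := by
  have hself : ofPath k q * p k Q v = ofPath k q := by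
    cases q with
    | nil => exact p_mul_self k Q u
    | cons q e => obtain ⟨e, _, rfl⟩ := e; rw [ofPath, mul_assoc, arrow_mul_tgt]
  split_ifs with hvw
  · rw [← hvw, hself]
  · rw [← hself, mul_assoc, p_mul_ne k Q v w hvw, mul_zero]

theorem ofPath_mul_arrow {u v : Q.V} (q : Quiver.Path u v) (e : Q.A) :
    ofPath k q * arrow k Q e =
      if h : Q.src e = v then ofPath k (q.cons (⟨e, h, rfl⟩ : v ⟶ Q.tgt e)) else 0 := by
  split_ifs with h
  · rfl
  · rw [← src_mul_arrow, ← mul_assoc, ofPath_mul_p, if_neg (Ne.symm h), zero_mul]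

variable (k Q) in
/-- The elements of the path algebra given by the paths of length less than `n`. -/
def pathsOfLengthLT (n : ℕ) : Set (PathAlg k Q) :=
  {a | ∃ (u v : Q.V) (q : Quiver.Path u v), q.length < n ∧ ofPath k q = a}

theorem finite_pathsOfLengthLT (n : ℕ) : (pathsOfLengthLT k Q n).Finite := by
  induction n with
  | zero => simp [pathsOfLengthLT]
  | succ n ih =>
    refine ((Set.finite_range (p k Q)).union (ih.mul (Set.finite_range (arrow k Q)))).subset ?_
    rintro _ ⟨u, v, q, hq, rfl⟩
    cases q with
    | nil => exact Or.inl ⟨u, rfl⟩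
    | cons q e =>
      exact Or.inr (Set.mul_mem_mul ⟨_, _, q, Nat.lt_of_succ_lt_succ hq, rfl⟩ ⟨e.1, rfl⟩)

variable (k Q) in
theorem span_ofPath_eq_top :
    Submodule.span k {a | ∃ (u v : Q.V) (q : Quiver.Path u v), ofPath k q = a} = ⊤ := by
  set W := Submodule.span k {a | ∃ (u v : Q.V) (q : Quiver.Path u v), ofPath k q = a}
  have ofPath_mem {u v : Q.V} (q : Quiver.Path u v) : ofPath k q ∈ W :=
    Submodule.subset_span ⟨u, v, q, rfl⟩
  have mul_mem_of_ofPath_mul_mem {b : PathAlg k Q}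
      (hb : ∀ {u v : Q.V} (q : Quiver.Path u v), ofPath k q * b ∈ W) (a) (ha : a ∈ W) :
      a * b ∈ W := by
    induction ha using Submodule.span_induction with
    | mem a ha => obtain ⟨u, v, q, rfl⟩ := ha; exact hb q
    | zero => simp only [zero_mul, zero_mem]
    | add a a' _ _ ha ha' => simpa only [add_mul] using add_mem ha ha'
    | smul c a _ ha => simpa only [smul_mul_assoc] using W.smul_mem c ha
  have mul_mem (b : PathAlg k Q) : ∀ a ∈ W, a * b ∈ W := by
    induction b using induction_on with
    | algebraMap c =>
      intro a ha
      simpa only [← Algebra.commutes, ← Algebra.smul_def] using W.smul_mem c ha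
    | p w =>
      refine mul_mem_of_ofPath_mul_mem fun q => ?_
      rw [ofPath_mul_p]
      split_ifs
      exacts [ofPath_mem q, zero_mem W]
    | arrow e =>
      refine mul_mem_of_ofPath_mul_mem fun q => ?_
      rw [ofPath_mul_arrow]
      split_ifs
      exacts [ofPath_mem _, zero_mem W]
    | mul b c hb hc => intro a ha; simpa only [mul_assoc] using hc _ (hb a ha)
    | add b c hb hc => intro a ha; simpa only [mul_add] using add_mem (hb a ha) (hc a ha)
  have one_mem : (1 : PathAlg k Q) ∈ W :=
    sum_p k Q ▸ sum_mem fun v _ => ofPath_mem (.nil : Quiver.Path v v)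
  exact Submodule.eq_top_iff'.mpr fun b => by simpa only [one_mul] using mul_mem b 1 one_mem

end PathAlg

section Torsion

variable {M N : Type} [AddCommGroup M] [Module (PathAlg k Q) M] [AddCommGroup N]
  [Module (PathAlg k Q) N]

variable (k Q) in
/-- An element of a module over the path algebra is path-torsion if it is annihilated by all
sufficiently long paths and by all paths starting at a vertex that receives no arrow. -/
def IsPathTorsion (m : M) : Prop :=
  ∃ n : ℕ, ∀ (u v : Q.V) (q : Quiver.Path u v),
    (n ≤ q.length ∨ ∀ e, Q.tgt e ≠ u) → PathAlg.ofPath k q • m = 0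

theorem IsPathTorsion.map {m : M} (hm : IsPathTorsion k Q m) (f : M →ₗ[PathAlg k Q] N) :
    IsPathTorsion k Q (f m) := by
  obtain ⟨n, hn⟩ := hm
  exact ⟨n, fun u v q hq => by rw [← map_smul, hn u v q hq, map_zero]⟩

theorem IsPathTorsion.of_injective {f : M →ₗ[PathAlg k Q] N} (hf : Function.Injective f) {m : M}
    (hm : IsPathTorsion k Q (f m)) : IsPathTorsion k Q m := by
  obtain ⟨n, hn⟩ := hm
  exact ⟨n, fun u v q hq => hf (by rw [map_smul, hn u v q hq, map_zero])⟩

theorem finite_of_isPathTorsion [Module k M] [IsScalarTower k (PathAlg k Q) M]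
    [Module.Finite (PathAlg k Q) M] (hM : ∀ m : M, IsPathTorsion k Q m) : Module.Finite k M := by
  obtain ⟨t, ht⟩ := Module.Finite.fg_top (R := PathAlg k Q) (M := M)
  choose n hn using hM
  set s := {a | ∃ (u v : Q.V) (q : Quiver.Path u v), PathAlg.ofPath k q = a}
  have hspan : Submodule.span k (s • (t : Set M)) = ⊤ := by
    rw [Submodule.span_smul_of_span_eq_top (PathAlg.span_ofPath_eq_top k Q), ht,
      Submodule.restrictScalars_top]
  have hsubset : s • (t : Set M) ⊆
      {0} ∪ ⋃ m ∈ t, (· • m) '' PathAlg.pathsOfLengthLT k Q (n m) := by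
    rintro _ ⟨_, ⟨u, v, q, rfl⟩, m, hm, rfl⟩
    rcases lt_or_ge q.length (n m) with hq | hq
    · exact Or.inr (Set.mem_biUnion hm ⟨_, ⟨u, v, q, hq, rfl⟩, rfl⟩)
    · exact Or.inl (hn m u v q (Or.inl hq))
  have hfin : (s • (t : Set M)).Finite :=
    ((Set.finite_singleton 0).union (t.finite_toSet.biUnion fun m _ =>
      (PathAlg.finite_pathsOfLengthLT (n m)).image _)).subset hsubset
  exact ⟨hspan ▸ Submodule.fg_span hfin⟩

end Torsion

end PathAlgebra

section TensorPhi

variable {P L : Type} [Ring P] [Ring L] (φ : P →+* L) (M : Type) [AddCommGroup M] [Module P M]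

/-- The canonical map `M → L ⊗_P M`, `m ↦ 1 ⊗ m`. -/
noncomputable def toTensorPhi : M →ₛₗ[φ] TensorPhi P L φ M where
  toFun m := (trel P L φ M).mkQ (1 ⊗ₜ[ℤ] m)
  map_add' m m' := by rw [TensorProduct.tmul_add, map_add]
  map_smul' p m := by
    rw [← map_smul, TensorProduct.smul_tmul', smul_eq_mul, mul_one, eq_comm, ← sub_eq_zero,
      ← map_sub, Submodule.mkQ_apply, Submodule.Quotient.mk_eq_zero]
    exact Submodule.subset_span ⟨1, p, m, by rw [one_mul]⟩

variable {φ M}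

theorem toTensorPhi_apply (m : M) : toTensorPhi φ M m = (trel P L φ M).mkQ (1 ⊗ₜ[ℤ] m) := rfl

theorem mkQ_tmul (l : L) (m : M) :
    (trel P L φ M).mkQ (l ⊗ₜ[ℤ] m) = l • toTensorPhi φ M m := by
  rw [toTensorPhi_apply, ← map_smul, TensorProduct.smul_tmul', smul_eq_mul, mul_one]

theorem exists_linearMap_toTensorPhi {N : Type} [AddCommGroup N] [Module L N] (f : M →ₛₗ[φ] N) :
    ∃ g : TensorPhi P L φ M →ₗ[L] N, ∀ m, g (toTensorPhi φ M m) = f m := by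
  let ψ : TensorProduct ℤ L M →ₗ[L] N :=
    TensorProduct.AlgebraTensorModule.lift
      (LinearMap.toSpanSingleton L (M →ₗ[ℤ] N) f.toAddMonoidHom.toIntLinearMap)
  have hψ (l : L) (m : M) : ψ (l ⊗ₜ m) = l • f m := rfl
  have hrel : trel P L φ M ≤ LinearMap.ker ψ := by
    rw [trel, Submodule.span_le]
    rintro _ ⟨l, p, m, rfl⟩
    rw [SetLike.mem_coe, LinearMap.mem_ker, map_sub, hψ, hψ, map_smulₛₗ, mul_smul, sub_self]
  refine ⟨(trel P L φ M).liftQ ψ hrel, fun m => ?_⟩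
  rw [toTensorPhi_apply, Submodule.mkQ_apply, Submodule.liftQ_apply, hψ, one_smul]

theorem subsingleton_tensorPhi_iff :
    Subsingleton (TensorPhi P L φ M) ↔
      ∀ (N : Type) [AddCommGroup N] [Module L N] (f : M →ₛₗ[φ] N), f = 0 := by
  refine ⟨fun _ N _ _ f => ?_, fun h => subsingleton_of_forall_eq 0 fun x => ?_⟩
  · obtain ⟨g, hg⟩ := exists_linearMap_toTensorPhi f
    ext m
    rw [← hg, Subsingleton.elim (toTensorPhi φ M m) 0, map_zero, LinearMap.zero_apply]
  · obtain ⟨x, rfl⟩ := (trel P L φ M).mkQ_surjective x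
    induction x with
    | zero => exact map_zero _
    | tmul l m => rw [mkQ_tmul, h _ (toTensorPhi φ M), LinearMap.zero_apply, smul_zero]
    | add x y hx hy => rw [map_add, hx, hy, add_zero]

variable {M' M'' : Type} [AddCommGroup M'] [Module P M'] [AddCommGroup M''] [Module P M'']

theorem subsingleton_tensorPhi_of_exact {i : M' →ₗ[P] M} {g : M →ₗ[P] M''}
    (hg : Function.Surjective g) (hig : LinearMap.range i = LinearMap.ker g)
    (hM' : Subsingleton (TensorPhi P L φ M')) (hM'' : Subsingleton (TensorPhi P L φ M'')) :
    Subsingleton (TensorPhi P L φ M) := by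
  rw [subsingleton_tensorPhi_iff] at hM' hM'' ⊢
  intro N _ _ f
  have hker : LinearMap.ker g ≤ LinearMap.ker f := by
    rw [← hig, LinearMap.range_le_ker_iff]
    exact hM' N (f.comp i)
  let f' : M'' →ₛₗ[φ] N :=
    ((LinearMap.ker g).liftQ f hker).comp (g.quotKerEquivOfSurjective hg).symm.toLinearMap
  ext m
  have hf' : f' (g m) = f m := by
    have hm : (g.quotKerEquivOfSurjective hg).symm (g m) = Submodule.Quotient.mk m :=
      (LinearEquiv.symm_apply_eq _).mpr rfl
    rw [LinearMap.comp_apply, LinearEquiv.coe_coe, hm, Submodule.liftQ_apply]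
  rw [← hf', hM'' N f', LinearMap.zero_apply, LinearMap.zero_apply]

end TensorPhi

section LeavittModule

variable {k : Type} [CommRing k] {Q : FinQuiver}

variable (k Q) in
theorem revToLeavitt_p (v : Q.rev.V) : revToLeavitt k Q (PathAlg.p k Q.rev v) = Leavitt.p k Q v :=
  (RingQuot.liftAlgHom_mkAlgHom_apply k _ _ _).trans (FreeAlgebra.lift_ι_apply _ _)

variable (k Q) in
theorem revToLeavitt_arrow (e : Q.rev.A) :
    revToLeavitt k Q (PathAlg.arrow k Q.rev e) = Leavitt.gh k Q e :=
  (RingQuot.liftAlgHom_mkAlgHom_apply k _ _ _).trans (FreeAlgebra.lift_ι_apply _ _)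

variable (k) in
theorem Leavitt.sum_ed_mul_gh {v : Q.V} (hv : ∃ e, Q.src e = v) :
    ∑ e with Q.src e = v, ed k Q e * gh k Q e = p k Q v := by
  simpa only [map_sum, map_mul, ed, gh, p] using mk_rel k Q (.cuntz_krieger v hv)

theorem Leavitt.eq_zero_of_gh_smul_eq_zero {N : Type} [AddCommGroup N] [Module (Leavitt k Q) N]
    {x : N} (hgh : ∀ e, gh k Q e • x = 0) (hp : ∀ v, (∀ e, Q.src e ≠ v) → p k Q v • x = 0) :
    x = 0 := by
  rw [← one_smul (Leavitt k Q) x, ← sum_p, Finset.sum_smul]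
  refine Finset.sum_eq_zero fun v _ => ?_
  by_cases hv : ∃ e, Q.src e = v
  · rw [← sum_ed_mul_gh k hv, Finset.sum_smul]
    exact Finset.sum_eq_zero fun e _ => by rw [mul_smul, hgh, smul_zero]
  · exact hp v (not_exists.mp hv)

theorem IsPathTorsion.map_eq_zero {M N : Type} [AddCommGroup M] [Module (PathAlg k Q.rev) M]
    [AddCommGroup N] [Module (Leavitt k Q) N] {m : M} (hm : IsPathTorsion k Q.rev m)
    (f : M →ₛₗ[(revToLeavitt k Q).toRingHom] N) : f m = 0 := by
  have smul_map (a : PathAlg k Q.rev) (m : M) : revToLeavitt k Q a • f m = f (a • m) :=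
    (map_smulₛₗ f a m).symm
  obtain ⟨n, hn⟩ := hm
  induction n generalizing m with
  | zero =>
    have hm : m = 0 := by
      rw [← one_smul (PathAlg k Q.rev) m, ← PathAlg.sum_p, Finset.sum_smul]
      exact Finset.sum_eq_zero fun v _ => hn v v .nil (Or.inl le_rfl)
    rw [hm, map_zero]
  | succ n ih =>
    refine Leavitt.eq_zero_of_gh_smul_eq_zero (k := k) (Q := Q)
      (fun (e : Q.rev.A) => ?_) (fun (v : Q.rev.V) hv => ?_)
    · rw [← revToLeavitt_arrow, smul_map]
      refine ih fun u v q hq => ?_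
      rw [← mul_smul, PathAlg.ofPath_mul_arrow]
      split_ifs
      · exact hn _ _ _ (hq.imp_left Nat.succ_le_succ)
      · exact zero_smul _ m
    · rw [← revToLeavitt_p, smul_map, ← PathAlg.ofPath_nil, hn v v .nil (Or.inr hv), map_zero]

end LeavittModule

section Germ

variable (k : Type) [CommRing k] (Q : FinQuiver) (M : Type) [AddCommGroup M] [Module k M]

/-- The `M`-valued functions on the paths of the inverse quiver. -/
abbrev PathFun : Type := ∀ u v : Q.rev.V, Quiver.Path u v → M

namespace PathFun

variable {Q M} in
/-- Cuts a function on paths down to the paths ending at `w`. -/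
def vertexOp (w : Q.rev.V) : Module.End k (PathFun Q M) where
  toFun x := fun _ v q => if v = w then x _ _ q else 0
  map_add' x y := by ext u v q; by_cases h : v = w <;> simp [h]
  map_smul' c x := by ext u v q; by_cases h : v = w <;> simp [h]

variable {Q M} in
/-- Evaluates a function on paths after appending the arrow `e`. -/
def ghostOp (e : Q.rev.A) : Module.End k (PathFun Q M) where
  toFun x := fun _ v q =>
    if h : Q.rev.src e = v then x _ _ (q.cons (⟨e, h, rfl⟩ : v ⟶ Q.rev.tgt e)) else 0
  map_add' x y := by ext u v q; by_cases h : Q.rev.src e = v <;> simp [h]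
  map_smul' c x := by ext u v q; by_cases h : Q.rev.src e = v <;> simp [h]

variable {Q M} in
/-- Evaluates a function on paths after removing the last arrow `e`, giving `0` on the paths which
do not end with `e`. -/
def edgeOp (e : Q.rev.A) : Module.End k (PathFun Q M) where
  toFun x := fun
    | _, _, .nil => 0
    | _, _, .cons q f => if f.1 = e then x _ _ q else 0
  map_add' x y := by
    ext u v q
    cases q with
    | nil => exact (add_zero 0).symm
    | cons q f => by_cases h : f.1 = e <;> simp [h]
  map_smul' c x := by
    ext u v q
    cases q with
    | nil => exact (smul_zero c).symm
    | cons q f => by_cases h : f.1 = e <;> simp [h]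

variable {k Q M}

theorem end_ext {f g : Module.End k (PathFun Q M)}
    (h : ∀ (x : PathFun Q M) (u v : Q.rev.V) (q : Quiver.Path u v), f x u v q = g x u v q) :
    f = g :=
  LinearMap.ext fun x => funext₃ (h x)

theorem vertexOp_apply (w : Q.rev.V) (x : PathFun Q M) {u v : Q.rev.V} (q : Quiver.Path u v) :
    vertexOp k w x u v q = if v = w then x u v q else 0 := rfl

theorem ghostOp_apply (e : Q.rev.A) (x : PathFun Q M) {u v : Q.rev.V} (q : Quiver.Path u v) :
    ghostOp k e x u v q =
      if h : Q.rev.src e = v then x _ _ (q.cons (⟨e, h, rfl⟩ : v ⟶ Q.rev.tgt e)) else 0 := rfl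

theorem edgeOp_nil (e : Q.rev.A) (x : PathFun Q M) (u : Q.rev.V) :
    edgeOp k e x u u .nil = 0 := rfl

theorem edgeOp_cons (e : Q.rev.A) (x : PathFun Q M) {u v w : Q.rev.V} (q : Quiver.Path u v)
    (f : v ⟶ w) : edgeOp k e x u w (q.cons f) = if f.1 = e then x u v q else 0 := rfl

theorem vertexOp_mul_self (v : Q.rev.V) :
    (vertexOp k v * vertexOp k v : Module.End k (PathFun Q M)) = vertexOp k v := by
  refine end_ext fun x u w q => ?_
  by_cases h : w = v <;> simp [vertexOp_apply, h]

theorem vertexOp_mul_of_ne {v w : Q.rev.V} (hvw : v ≠ w) :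
    (vertexOp k v * vertexOp k w : Module.End k (PathFun Q M)) = 0 := by
  refine end_ext fun x u t q => ?_
  by_cases h : t = v <;> simp [vertexOp_apply, h, hvw]

theorem sum_vertexOp_apply (x : PathFun Q M) : ∑ v, vertexOp k v x = x := by
  ext u v q
  simp [vertexOp_apply, Finset.sum_apply]

theorem vertexOp_mul_edgeOp (e : Q.rev.A) :
    (vertexOp k (Q.rev.tgt e) * edgeOp k e : Module.End k (PathFun Q M)) = edgeOp k e := by
  refine end_ext fun x u v q => ?_
  cases q with
  | nil => simp [vertexOp_apply, edgeOp_nil]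
  | cons q f =>
    obtain ⟨f, _, rfl⟩ := f
    by_cases h : f = e <;> simp [vertexOp_apply, edgeOp_cons, h]

theorem edgeOp_mul_vertexOp (e : Q.rev.A) :
    (edgeOp k e * vertexOp k (Q.rev.src e) : Module.End k (PathFun Q M)) = edgeOp k e := by
  refine end_ext fun x u v q => ?_
  cases q with
  | nil => rfl
  | cons q f =>
    obtain ⟨f, rfl, _⟩ := f
    by_cases h : f = e <;> simp [vertexOp_apply, edgeOp_cons, h]

theorem vertexOp_mul_ghostOp (e : Q.rev.A) :
    (vertexOp k (Q.rev.src e) * ghostOp k e : Module.End k (PathFun Q M)) = ghostOp k e := by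
  refine end_ext fun x u v q => ?_
  by_cases h : Q.rev.src e = v
  · simp [vertexOp_apply, h]
  · simp [vertexOp_apply, ghostOp_apply, h]

theorem ghostOp_mul_vertexOp (e : Q.rev.A) :
    (ghostOp k e * vertexOp k (Q.rev.tgt e) : Module.End k (PathFun Q M)) = ghostOp k e := by
  refine end_ext fun x u v q => ?_
  simp [vertexOp_apply, ghostOp_apply]

theorem ghostOp_mul_edgeOp_self (e : Q.rev.A) :
    (ghostOp k e * edgeOp k e : Module.End k (PathFun Q M)) = vertexOp k (Q.rev.src e) := by
  refine end_ext fun x u v q => ?_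
  simp [vertexOp_apply, ghostOp_apply, edgeOp_cons, eq_comm]

theorem ghostOp_mul_edgeOp_of_ne {e f : Q.rev.A} (hef : e ≠ f) :
    (ghostOp k e * edgeOp k f : Module.End k (PathFun Q M)) = 0 := by
  refine end_ext fun x u v q => ?_
  simp [ghostOp_apply, edgeOp_cons, hef]

theorem sum_edgeOp_ghostOp_cons (v : Q.rev.V) (x : PathFun Q M) {u t w : Q.rev.V}
    (q : Quiver.Path u t) (f : t ⟶ w) :
    (∑ e with Q.rev.tgt e = v, edgeOp k e (ghostOp k e x)) u w (q.cons f) =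
      vertexOp k v x u w (q.cons f) := by
  obtain ⟨f, rfl, rfl⟩ := f
  set q' : Quiver.Path u (Q.rev.tgt f) := q.cons ⟨f, rfl, rfl⟩
  have hedge (e : Q.rev.A) : edgeOp k e (ghostOp k e x) u (Q.rev.tgt f) q' =
      if e = f then x u (Q.rev.tgt f) q' else 0 := by
    split_ifs with hef
    · subst hef; simp [q', edgeOp_cons, ghostOp_apply]
    · rw [edgeOp_cons, if_neg (Ne.symm hef)]
  simp [Finset.sum_apply, hedge, vertexOp_apply]

variable (k Q M) in
/-- The functions vanishing on all sufficiently long paths and on all paths starting at a vertex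
that receives no arrow of the inverse quiver. -/
def null : Submodule k (PathFun Q M) where
  carrier := {x | ∃ n : ℕ, ∀ (u v : Q.rev.V) (q : Quiver.Path u v),
    (n ≤ q.length ∨ ∀ e, Q.rev.tgt e ≠ u) → x u v q = 0}
  zero_mem' := ⟨0, fun _ _ _ _ => rfl⟩
  add_mem' := by
    rintro x y ⟨m, hm⟩ ⟨n, hn⟩
    refine ⟨max m n, fun u v q hq => ?_⟩
    rw [Pi.add_apply, Pi.add_apply, Pi.add_apply, hm u v q (hq.imp_left (le_max_left m n).trans),
      hn u v q (hq.imp_left (le_max_right m n).trans), add_zero]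
  smul_mem' := by
    rintro c x ⟨n, hn⟩
    exact ⟨n, fun u v q hq => by
      rw [Pi.smul_apply, Pi.smul_apply, Pi.smul_apply, hn u v q hq, smul_zero]⟩

theorem null_le_comap_vertexOp (v : Q.rev.V) : null k Q M ≤ (null k Q M).comap (vertexOp k v) := by
  rintro x ⟨n, hn⟩
  refine ⟨n, fun u w q hq => ?_⟩
  rw [vertexOp_apply, hn u w q hq, ite_self]

theorem null_le_comap_ghostOp (e : Q.rev.A) : null k Q M ≤ (null k Q M).comap (ghostOp k e) := by
  rintro x ⟨n, hn⟩
  refine ⟨n, fun u v q hq => ?_⟩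
  rw [ghostOp_apply]
  split_ifs
  exacts [hn _ _ _ (hq.imp_left Nat.le_succ_of_le), rfl]

theorem null_le_comap_edgeOp (e : Q.rev.A) : null k Q M ≤ (null k Q M).comap (edgeOp k e) := by
  rintro x ⟨n, hn⟩
  refine ⟨n + 1, fun u v q hq => ?_⟩
  cases q with
  | nil => rfl
  | cons q f => rw [edgeOp_cons, hn _ _ q (hq.imp_left Nat.le_of_succ_le_succ), ite_self]

theorem sum_edgeOp_ghostOp_sub_mem_null {v : Q.rev.V} (hv : ∃ e, Q.rev.tgt e = v)
    (x : PathFun Q M) :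
    ∑ e with Q.rev.tgt e = v, edgeOp k e (ghostOp k e x) - vertexOp k v x ∈ null k Q M := by
  refine ⟨1, fun u w q hq => sub_eq_zero.mpr ?_⟩
  cases q with
  | cons q f => exact sum_edgeOp_ghostOp_cons v x q f
  | nil =>
    have huv : u ≠ v := by
      rintro rfl
      exact hq.elim (fun h => by simp at h) (fun h => hv.elim h)
    simp [Finset.sum_apply, edgeOp_nil, vertexOp_apply, huv]

end PathFun

open PathFun

/-- Functions on the paths of the inverse quiver modulo those vanishing on all sufficiently long
paths and on all paths starting at a vertex that receives no arrow of the inverse quiver. Only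
modulo these does the last Cuntz–Krieger relation hold. -/
abbrev Germ : Type := PathFun Q M ⧸ null k Q M

variable {Q} in
/-- The action of the generators of the Leavitt path algebra on germs. -/
def germOp : LGen Q → Module.End k (Germ k Q M)
  | .vertex v => (null k Q M).mapQ _ (vertexOp k v) (null_le_comap_vertexOp v)
  | .edge e => (null k Q M).mapQ _ (edgeOp k e) (null_le_comap_edgeOp e)
  | .ghost e => (null k Q M).mapQ _ (ghostOp k e) (null_le_comap_ghostOp e)

theorem lift_germOp_eq_of_leavittRel {a b : FreeAlgebra k (LGen Q)} (h : LeavittRel k Q a b) :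
    FreeAlgebra.lift k (germOp k M) a = FreeAlgebra.lift k (germOp k M) b := by
  refine Submodule.linearMap_qext _ (LinearMap.ext fun x => ?_)
  have mkQ_congr {f g : Module.End k (PathFun Q M)} (hfg : f = g) :
      (null k Q M).mkQ (f x) = (null k Q M).mkQ (g x) := by rw [hfg]
  induction h with
  | vertex_mul_self v =>
    simp only [map_mul, FreeAlgebra.lift_ι_apply]
    exact mkQ_congr (vertexOp_mul_self v)
  | vertex_mul_ne v w h =>
    simp only [map_mul, map_zero, FreeAlgebra.lift_ι_apply]
    exact mkQ_congr (vertexOp_mul_of_ne h)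
  | sum_vertex =>
    simp only [map_sum, map_one, FreeAlgebra.lift_ι_apply]
    rw [LinearMap.comp_apply, LinearMap.sum_apply]
    exact (map_sum (null k Q M).mkQ (fun v => vertexOp k v x) _).symm.trans
      (congrArg _ (sum_vertexOp_apply x))
  | src_mul e =>
    simp only [map_mul, FreeAlgebra.lift_ι_apply]
    exact mkQ_congr (vertexOp_mul_edgeOp e)
  | mul_tgt e =>
    simp only [map_mul, FreeAlgebra.lift_ι_apply]
    exact mkQ_congr (edgeOp_mul_vertexOp e)
  | tgt_mul_ghost e =>
    simp only [map_mul, FreeAlgebra.lift_ι_apply]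
    exact mkQ_congr (vertexOp_mul_ghostOp e)
  | ghost_mul_src e =>
    simp only [map_mul, FreeAlgebra.lift_ι_apply]
    exact mkQ_congr (ghostOp_mul_vertexOp e)
  | ghost_mul_edge_self e =>
    simp only [map_mul, FreeAlgebra.lift_ι_apply]
    exact mkQ_congr (ghostOp_mul_edgeOp_self e)
  | ghost_mul_edge_ne e f h =>
    simp only [map_mul, map_zero, FreeAlgebra.lift_ι_apply]
    exact mkQ_congr (ghostOp_mul_edgeOp_of_ne h)
  | cuntz_krieger v hv =>
    simp only [map_sum, map_mul, FreeAlgebra.lift_ι_apply]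
    rw [LinearMap.comp_apply, LinearMap.sum_apply]
    refine (map_sum (null k Q M).mkQ (fun e => edgeOp k e (ghostOp k e x)) _).symm.trans ?_
    exact (Submodule.Quotient.eq _).mpr (sum_edgeOp_ghostOp_sub_mem_null hv x)

/-- The action of the Leavitt path algebra on germs. -/
noncomputable def leavittToEndGerm : Leavitt k Q →ₐ[k] Module.End k (Germ k Q M) :=
  RingQuot.liftAlgHom k ⟨FreeAlgebra.lift k (germOp k M), @lift_germOp_eq_of_leavittRel k _ Q M _ _⟩

theorem leavittToEndGerm_p (v : Q.rev.V) :
    leavittToEndGerm k Q M (Leavitt.p k Q v) = germOp k M (Q := Q) (.vertex v) :=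
  (RingQuot.liftAlgHom_mkAlgHom_apply k _ _ _).trans (FreeAlgebra.lift_ι_apply _ _)

theorem leavittToEndGerm_gh (e : Q.rev.A) :
    leavittToEndGerm k Q M (Leavitt.gh k Q e) = germOp k M (Q := Q) (.ghost e) :=
  (RingQuot.liftAlgHom_mkAlgHom_apply k _ _ _).trans (FreeAlgebra.lift_ι_apply _ _)

noncomputable instance : Module (Leavitt k Q) (Germ k Q M) :=
  Module.compHom _ (leavittToEndGerm k Q M).toRingHom

variable [Module (PathAlg k Q.rev) M] [IsScalarTower k (PathAlg k Q.rev) M]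

variable {M} in
/-- The function on paths recording how the paths act on `m`. -/
noncomputable def orbitFun : M →ₗ[k] PathFun Q M where
  toFun m := fun _ _ q => PathAlg.ofPath k q • m
  map_add' m m' := by ext u v q; exact smul_add _ m m'
  map_smul' c m := by ext u v q; exact smul_algebra_smul_comm c _ m

variable {k Q M}

theorem orbitFun_apply (m : M) {u v : Q.rev.V} (q : Quiver.Path u v) :
    orbitFun k Q m u v q = PathAlg.ofPath k q • m := rfl

theorem orbitFun_p_smul (w : Q.rev.V) (m : M) :
    orbitFun k Q (PathAlg.p k Q.rev w • m) = vertexOp k w (orbitFun k Q m) := by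
  ext u v q
  rw [orbitFun_apply, ← mul_smul, PathAlg.ofPath_mul_p, ite_smul, zero_smul]
  rfl

theorem orbitFun_arrow_smul (e : Q.rev.A) (m : M) :
    orbitFun k Q (PathAlg.arrow k Q.rev e • m) = ghostOp k e (orbitFun k Q m) := by
  ext u v q
  rw [orbitFun_apply, ← mul_smul, PathAlg.ofPath_mul_arrow, dite_smul]
  simp only [zero_smul]
  rfl

variable (k Q M) in
/-- The canonical map from a module over the path algebra of the inverse quiver to its germs. -/
noncomputable def toGerm : M →ₛₗ[(revToLeavitt k Q).toRingHom] Germ k Q M where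
  toFun m := (null k Q M).mkQ (orbitFun k Q m)
  map_add' m m' := by rw [map_add, map_add]
  map_smul' a m := by
    change _ = leavittToEndGerm k Q M (revToLeavitt k Q a) _
    induction a using PathAlg.induction_on generalizing m with
    | algebraMap c =>
      rw [AlgHom.commutes, AlgHom.commutes, algebraMap_smul, Module.algebraMap_end_apply, map_smul,
        map_smul]
    | p v => rw [revToLeavitt_p, leavittToEndGerm_p, orbitFun_p_smul]; rfl
    | arrow e => rw [revToLeavitt_arrow, leavittToEndGerm_gh, orbitFun_arrow_smul]; rfl
    | mul a b ha hb => rw [mul_smul, ha, hb, map_mul, map_mul, Module.End.mul_apply]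
    | add a b ha hb =>
      rw [add_smul, map_add, map_add, ha, hb, map_add, map_add, LinearMap.add_apply]

theorem toGerm_eq_zero_iff {m : M} : toGerm k Q M m = 0 ↔ IsPathTorsion k Q.rev m :=
  Submodule.Quotient.mk_eq_zero _

theorem subsingleton_tensorPhi_iff_isPathTorsion :
    Subsingleton (TensorPhi (PathAlg k Q.rev) (Leavitt k Q) (revToLeavitt k Q).toRingHom M) ↔
      ∀ m : M, IsPathTorsion k Q.rev m := by
  rw [subsingleton_tensorPhi_iff]
  refine ⟨fun h m => ?_, fun h N _ _ f => LinearMap.ext fun m => (h m).map_eq_zero f⟩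
  rw [← toGerm_eq_zero_iff, h _ (toGerm k Q M), LinearMap.zero_apply]

end Germ

section FinDim

variable {k R : Type} [Field k] [Ring R] [Algebra k R]

theorem finDimOver_iff_of_isSES {A B C : ModuleOver R} (h : IsSES A B C) :
    FinDimOver k R B ↔ FinDimOver k R A ∧ FinDimOver k R C := by
  let : Module k A.carrier := Module.compHom A.carrier (algebraMap k R)
  let : Module k B.carrier := Module.compHom B.carrier (algebraMap k R)
  let : Module k C.carrier := Module.compHom C.carrier (algebraMap k R)
  have : IsScalarTower k R A.carrier := .of_compHom ..
  have : IsScalarTower k R B.carrier := .of_compHom ..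
  have : IsScalarTower k R C.carrier := .of_compHom ..
  obtain ⟨f, g, hf, hg, hfg⟩ := h
  refine ⟨fun hB => ?_, fun ⟨hA, hC⟩ => ?_⟩
  · have : Module.Finite k B.carrier := hB
    exact ⟨Module.Finite.of_injective (f.restrictScalars k) hf,
      Module.Finite.of_surjective (g.restrictScalars k) hg⟩
  · have : Module.Finite k A.carrier := hA
    have : Module.Finite k C.carrier := hC
    have : IsNoetherian k B.carrier :=
      isNoetherian_of_range_eq_ker (f.restrictScalars k) (g.restrictScalars k)
        (SetLike.ext fun x => SetLike.ext_iff.mp hfg x)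
    exact inferInstanceAs (Module.Finite k B.carrier)

variable {X : ModuleOver R}

theorem FinDimOver.finitePresentation [Algebra.FiniteType k R] (h : FinDimOver k R X) :
    Module.FinitePresentation R X.carrier := by
  let : Module k X.carrier := Module.compHom X.carrier (algebraMap k R)
  have : IsScalarTower k R X.carrier := .of_compHom ..
  have : Module.Finite k X.carrier := h
  have := Module.finitePresentation_of_finite k X.carrier
  exact finitePresentation_of_finiteType k R X.carrier

theorem FinDimOver.isFiniteLength (h : FinDimOver k R X) : IsFiniteLength R X.carrier := by
  let : Module k X.carrier := Module.compHom X.carrier (algebraMap k R)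
  have : IsScalarTower k R X.carrier := .of_compHom ..
  have : Module.Finite k X.carrier := h
  exact isFiniteLength_iff_isNoetherian_isArtinian.mpr
    ⟨isNoetherian_of_tower k inferInstance, isArtinian_of_tower k inferInstance⟩

end FinDim

section MClass

variable {k : Type} [Field k] {Q : FinQuiver}

theorem mClass_iff {X : ModuleOver (PathAlg k Q.rev)} :
    MClass k Q X ↔
      FinDimOver k (PathAlg k Q.rev) X ∧ ∀ m : X.carrier, IsPathTorsion k Q.rev m := by
  let : Module k X.carrier := Module.compHom X.carrier (algebraMap k (PathAlg k Q.rev))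
  have : IsScalarTower k (PathAlg k Q.rev) X.carrier := .of_compHom ..
  rw [MClass, subsingleton_tensorPhi_iff_isPathTorsion]
  exact and_congr_left fun htors =>
    ⟨fun _ => finite_of_isPathTorsion htors, FinDimOver.finitePresentation⟩

theorem MClass.finDimOver {X : ModuleOver (PathAlg k Q.rev)} (h : MClass k Q X) :
    FinDimOver k (PathAlg k Q.rev) X :=
  (mClass_iff.mp h).1

theorem MClass.fplClass {X : ModuleOver (PathAlg k Q.rev)} (h : MClass k Q X) : FplClass k Q X :=
  ⟨h.1, h.finDimOver.isFiniteLength⟩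

variable (k Q) in
theorem isSerreClass_mClass : IsSerreClass (MClass k Q) := by
  intro A B C h
  have hfin := finDimOver_iff_of_isSES (k := k) h
  obtain ⟨f, g, hf, hg, hfg⟩ := h
  refine ⟨fun hB => ?_, fun ⟨hA, hC⟩ => ?_⟩
  · have htors := (mClass_iff.mp hB).2
    obtain ⟨hfinA, hfinC⟩ := hfin.mp hB.finDimOver
    exact ⟨mClass_iff.mpr ⟨hfinA, fun m => .of_injective hf (htors (f m))⟩,
      mClass_iff.mpr ⟨hfinC, hg.forall.mpr fun m => (htors m).map g⟩⟩
  · exact ⟨(hfin.mpr ⟨hA.finDimOver, hC.finDimOver⟩).finitePresentation,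
      subsingleton_tensorPhi_of_exact hg hfg hA.2 hC.2⟩

end MClass

end LPA

open LPA in
/-- Let `𝓜` be the category of finitely presented left `P_k(Ē)`-modules `M`
with `L_k(E) ⊗_{P_k(Ē)} M = 0`.  Then:
(a) every object of `𝓜` is finite-dimensional over `k`;
(b) `𝓜` is a Serre subcategory of the category `fpl(P_k(Ē))` of finitely presented modules
of finite length (in any short exact sequence in `fpl`, the middle term lies in `𝓜` iff the
outer terms do);
(c) the induced map `K₀(𝓜) → K₀(fpl(P_k(Ē)))` is injective, with image the subgroup
generated by the classes of the simple modules belonging to `𝓜`. -/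
theorem statement_12 (k : Type) [Field k] (Q : FinQuiver) :
    (∀ X : ModuleOver (PathAlg k Q.rev), MClass k Q X → FinDimOver k (PathAlg k Q.rev) X) ∧
    (∀ A B C : ModuleOver (PathAlg k Q.rev),
      FplClass k Q A → FplClass k Q B → FplClass k Q C → IsSES A B C →
        (MClass k Q B ↔ MClass k Q A ∧ MClass k Q C)) ∧
    (∃ j : K0 (PathAlg k Q.rev) (MClass k Q) →+ K0 (PathAlg k Q.rev) (FplClass k Q),
      (∀ (X : ModuleOver (PathAlg k Q.rev)) (hX : MClass k Q X) (hX' : FplClass k Q X),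
        j (K0.cls hX) = K0.cls hX') ∧
      Function.Injective j ∧
      AddMonoidHom.range j = AddSubgroup.closure
        {x | ∃ (X : ModuleOver (PathAlg k Q.rev)) (hX' : FplClass k Q X),
          IsSimpleModule (PathAlg k Q.rev) X.carrier ∧ MClass k Q X ∧ x = K0.cls hX'}) := by
  have hfpl (X : ModuleOver (PathAlg k Q.rev)) (hX : MClass k Q X) : FplClass k Q X := hX.fplClass
  have hserre := isSerreClass_mClass k Q
  exact ⟨fun X hX => hX.finDimOver, fun A B C _ _ _ h => hserre A B C h, K0.map hfpl,
    fun X hX _ => K0.map_cls hfpl hX, K0.map_injective hfpl (fun X hX => hX.2) hserre,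
    K0.range_map hfpl (fun X hX => (hfpl X hX).2) hserre⟩
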